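/- (2-Wasserstein distance of LMC iterates for a quadratic potential) Let f(x) = (m/2)·Σ_{i=1}^d x_i² + (L/2)·Σ_{i=d+1}^{2d} x_i² on ℝ^{2d} with 0 < m ≤ L, let μ be the probability measure on ℝ^{2d} with density proportional to exp(−f) (a Gaussian), and let (x̄_k) be the LMC iterates with step size h, 0 < h < 2/L, started from x₀ = (1,1,…,1) ∈ ℝ^{2d}. Then for every k ≥ 1: W₂²(Law(x̄_k), μ) = d(1 − mh)^{2k} + (d/m)·( √(2/(2 − mh))·√(1 − (1 − mh)^{2k}) − 1 )² + d(1 − Lh)^{2k} + (d/L)·( √(2/(2 − Lh))·√(1 − (1 − Lh)^{2k}) − 1 )². -/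

import Mathlib

open MeasureTheory ProbabilityTheory Real
open scoped ENNReal NNReal

noncomputable section

/-- `ℝ^d` with the Euclidean structure. -/
abbrev Euc (d : ℕ) := EuclideanSpace ℝ (Fin d)

/-- The standard Gaussian measure `N(0, I_d)` on `ℝ^d`. -/
noncomputable def stdGaussian (d : ℕ) : Measure (Euc d) :=
  (Measure.pi fun _ : Fin d => gaussianReal 0 1).map (EuclideanSpace.equiv (Fin d) ℝ).symm

/-- The centered Gaussian measure on `ℝ^d` with covariance `σ2 • I_d`. -/
noncomputable def isoGaussian (d : ℕ) (σ2 : ℝ) : Measure (Euc d) :=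
  (stdGaussian d).map fun x => Real.sqrt σ2 • x

/-- `B` is a standard `d`-dimensional Brownian motion with respect to the filtration `ℱ`
under the probability measure `P`. -/
structure IsStdBrownian {d : ℕ} {Ω : Type*} {mΩ : MeasurableSpace Ω} (P : Measure Ω)
    (ℱ : Filtration ℝ mΩ) (B : ℝ → Ω → Euc d) : Prop where
  init : ∀ ω, B 0 ω = 0
  cont : ∀ ω, Continuous fun t => B t ω
  adapted : StronglyAdapted ℱ B
  incr_law : ∀ s t : ℝ, 0 ≤ s → s ≤ t →
    P.map (fun ω => B t ω - B s ω) = isoGaussian d (t - s)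
  incr_indep : ∀ s t : ℝ, 0 ≤ s → s ≤ t →
    Indep (MeasurableSpace.comap (fun ω => B t ω - B s ω) inferInstance) (ℱ s) P

/-- `X` is a (pathwise) solution of the overdamped Langevin dynamics
`dX_t = -∇f(X_t) dt + √2 dB_t`: a continuous adapted process satisfying the integral
equation `X_t = X_0 - ∫₀ᵗ ∇f(X_s) ds + √2 B_t` for all `t ≥ 0`. -/
structure IsLangevinSolution {d : ℕ} {Ω : Type*} {mΩ : MeasurableSpace Ω}
    (ℱ : Filtration ℝ mΩ) (f : Euc d → ℝ) (B : ℝ → Ω → Euc d) (X : ℝ → Ω → Euc d) : Prop where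
  cont : ∀ ω, Continuous fun t => X t ω
  adapted : StronglyAdapted ℱ X
  eqn : ∀ ω, ∀ t : ℝ, 0 ≤ t →
    X t ω = X 0 ω - (∫ s in (0:ℝ)..t, gradient f (X s ω)) + Real.sqrt 2 • B t ω

/-- The Hessian bounds `m • I ≼ ∇²f(x) ≼ L • I` for all `x`, expressed through the second
iterated Fréchet derivative: `m ‖v‖² ≤ ⟨v, ∇²f(x) v⟩ ≤ L ‖v‖²`. -/
def HessianBounds {d : ℕ} (m L : ℝ) (f : Euc d → ℝ) : Prop :=
  ∀ x v : Euc d, m * ‖v‖ ^ 2 ≤ iteratedFDeriv ℝ 2 f x ![v, v] ∧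
    iteratedFDeriv ℝ 2 f x ![v, v] ≤ L * ‖v‖ ^ 2


/-- The 2-Wasserstein distance:
`W₂(μ, ν) = inf over couplings γ of (∫ ‖x - y‖² dγ)^{1/2}`, where a coupling of `μ` and `ν`
is a probability measure on the product space whose marginals are `μ` and `ν`. -/
noncomputable def W2 {α : Type*} [MeasurableSpace α] [NormedAddCommGroup α]
    (μ ν : Measure α) : ℝ :=
  Real.sqrt (ENNReal.toReal
    (⨅ γ ∈ {γ : Measure (α × α) |
        IsProbabilityMeasure γ ∧ γ.map Prod.fst = μ ∧ γ.map Prod.snd = ν},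
      ∫⁻ p, (‖p.1 - p.2‖₊ : ℝ≥0∞) ^ 2 ∂γ))

/-- `μ` is the probability measure with density proportional to `exp (-f)` with respect to
Lebesgue measure. -/
def IsGibbs {d : ℕ} (f : Euc d → ℝ) (μ : Measure (Euc d)) : Prop :=
  IsProbabilityMeasure μ ∧ ∃ c : ℝ≥0∞, c ≠ 0 ∧ c ≠ ⊤ ∧
    μ = c • (volume : Measure (Euc d)).withDensity fun x => ENNReal.ofReal (Real.exp (-f x))


/-- The quadratic potential `f(x) = (m/2) Σ_{i<d} x_i² + (L/2) Σ_{d ≤ i < 2d} x_i²` on `ℝ^{2d}`. -/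
noncomputable def fquad (d : ℕ) (m L : ℝ) : Euc (2 * d) → ℝ :=
  fun x => ∑ i : Fin (2 * d), ((if (i : ℕ) < d then m else L) / 2) * x i ^ 2

/-- Law of `m + s z` with `z` standard Gaussian (diagonal `s`). -/
noncomputable def gaussDiag {n : ℕ} (m s : Fin n → ℝ) : Measure (Euc n) :=
  (Measure.pi fun _ : Fin n => gaussianReal 0 1).map
    (fun z => WithLp.toLp 2 (fun i => m i + s i * z i))

lemma gaussDiag_meas {n : ℕ} (m s : Fin n → ℝ) :
    Measurable (fun z : Fin n → ℝ => (WithLp.toLp 2 (fun i => m i + s i * z i) : Euc n)) := by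
  fun_prop

instance {n : ℕ} (m s : Fin n → ℝ) : IsProbabilityMeasure (gaussDiag m s) :=
  Measure.isProbabilityMeasure_map (gaussDiag_meas m s).aemeasurable

lemma gaussDiag_eq {n : ℕ} (m s : Fin n → ℝ) :
    gaussDiag m s =
      (Measure.pi fun i => gaussianReal (m i) (.mk (s i ^ 2) (sq_nonneg _))).map (WithLp.toLp 2) := by
  have h1 : ∀ i, (gaussianReal 0 1).map (fun z => m i + s i * z)
      = gaussianReal (m i) (.mk (s i ^ 2) (sq_nonneg _)) := by
    intro i
    have : (fun z => m i + s i * z) = (fun y => m i + y) ∘ (fun z => s i * z) := rfl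
    rw [this, ← Measure.map_map (by fun_prop) (by fun_prop), gaussianReal_map_const_mul,
      gaussianReal_map_const_add]
    simp
  have h2 : (Measure.pi fun i => gaussianReal (m i) (.mk (s i ^ 2) (sq_nonneg _)))
      = (Measure.pi fun _ : Fin n => gaussianReal 0 1).map (fun z i => m i + s i * z i) := by
    have hs : ∀ i, SigmaFinite ((gaussianReal 0 1).map (fun z => m i + s i * z)) := by
      intro i; rw [h1]; infer_instance
    rw [Measure.pi_map_pi (f := fun i z => m i + s i * z) (fun i => by fun_prop)]
    simp_rw [h1]
  rw [h2, Measure.map_map (by fun_prop) (by fun_prop)]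
  rfl

lemma charFun_gaussDiag {n : ℕ} (m s : Fin n → ℝ) (t : Euc n) :
    charFun (gaussDiag m s) t =
      ∏ i, Complex.exp (t i * m i * Complex.I - (s i : ℂ) ^ 2 * t i ^ 2 / 2) := by
  rw [gaussDiag_eq, charFun_pi]
  refine Finset.prod_congr rfl fun i _ => ?_
  rw [charFun_gaussianReal]
  simp

lemma stdG_eq (n : ℕ) : _root_.stdGaussian n = gaussDiag (fun _ : Fin n => 0) (fun _ => 1) := by
  unfold _root_.stdGaussian gaussDiag
  congr 1
  ext z i
  simp

lemma gaussDiag_map {n : ℕ} (m s a b : Fin n → ℝ) :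
    (gaussDiag m s).map (fun x => (WithLp.toLp 2 (fun i => b i + a i * x i) : Euc n)) =
      gaussDiag (fun i => b i + a i * m i) (fun i => a i * s i) := by
  unfold gaussDiag
  rw [Measure.map_map (by fun_prop) (by fun_prop)]
  congr 1
  ext z i
  simp
  ring

lemma quad_int (A B C : ℝ) : Integrable (fun z : ℝ => A + B * z + C * z ^ 2) (gaussianReal 0 1) ∧
    ∫ z, (A + B * z + C * z ^ 2) ∂(gaussianReal 0 1) = A + C := by
  have i1 : Integrable (fun z : ℝ => z) (gaussianReal 0 1) :=
    (memLp_id_gaussianReal' 1 (by simp)).integrable le_rfl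
  have i2 : Integrable (fun z : ℝ => z ^ 2) (gaussianReal 0 1) :=
    (memLp_id_gaussianReal' 2 (by simp)).integrable_sq
  have e2 : ∫ z, z ^ 2 ∂(gaussianReal 0 1) = 1 := by
    have := variance_fun_id_gaussianReal (μ := 0) (v := 1)
    rw [variance_eq_integral (by fun_prop)] at this
    simpa using this
  have i3 : Integrable (fun z : ℝ => A + B * z) (gaussianReal 0 1) :=
    (integrable_const (μ := gaussianReal 0 1) A).add (i1.const_mul B)
  refine ⟨i3.add (i2.const_mul C), ?_⟩
  rw [integral_add i3 (i2.const_mul C), integral_add (integrable_const A) (i1.const_mul B),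
    integral_const_mul, integral_const_mul, e2, integral_id_gaussianReal]
  simp

lemma quad_int_pi {n : ℕ} (A B C : Fin n → ℝ) :
    Integrable (fun z : Fin n → ℝ => ∑ i, (A i + B i * z i + C i * z i ^ 2))
      (Measure.pi fun _ : Fin n => gaussianReal 0 1) ∧
    ∫ z, ∑ i, (A i + B i * z i + C i * z i ^ 2) ∂(Measure.pi fun _ : Fin n => gaussianReal 0 1)
      = ∑ i, (A i + C i) := by
  have hi : ∀ i, Integrable (fun z : Fin n → ℝ => (A i + B i * z i + C i * z i ^ 2))
      (Measure.pi fun _ : Fin n => gaussianReal 0 1) := fun i =>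
    integrable_comp_eval (μ := fun _ : Fin n => gaussianReal 0 1)
      (f := fun z => A i + B i * z + C i * z ^ 2) (quad_int (A i) (B i) (C i)).1
  refine ⟨integrable_finsetSum _ fun i _ => hi i, ?_⟩
  rw [integral_finsetSum _ fun i _ => hi i]
  refine Finset.sum_congr rfl fun i _ => ?_
  rw [integral_comp_eval (μ := fun _ : Fin n => gaussianReal 0 1)
      (f := fun z => A i + B i * z + C i * z ^ 2) (by fun_prop), (quad_int (A i) (B i) (C i)).2]

lemma quad_int_gd {n : ℕ} (m s A B C : Fin n → ℝ) :
    Integrable (fun x : Euc n => ∑ i, (A i + B i * (x i - m i) + C i * (x i - m i) ^ 2))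
      (gaussDiag m s) ∧
    ∫ x : Euc n, ∑ i, (A i + B i * (x i - m i) + C i * (x i - m i) ^ 2) ∂(gaussDiag m s)
      = ∑ i, (A i + C i * s i ^ 2) := by
  have key := quad_int_pi A (fun i => B i * s i) (fun i => C i * s i ^ 2)
  have e : ((fun x : Euc n => ∑ i, (A i + B i * (x i - m i) + C i * (x i - m i) ^ 2)) ∘
      fun z : Fin n → ℝ => (WithLp.toLp 2 (fun i => m i + s i * z i) : Euc n))
      = fun z => ∑ i, (A i + B i * s i * z i + C i * s i ^ 2 * z i ^ 2) := by
    ext z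
    simp only [Function.comp_apply]
    refine Finset.sum_congr rfl fun i _ => ?_
    ring
  unfold gaussDiag
  constructor
  · rw [integrable_map_measure (by fun_prop) (gaussDiag_meas m s).aemeasurable, e]
    exact key.1
  · rw [integral_map (gaussDiag_meas m s).aemeasurable (by fun_prop), ← key.2]
    exact congrArg (fun f => ∫ z, f z ∂_) e

lemma ofReal_integral_le {α : Type*} [MeasurableSpace α] {γ : Measure α} {F : α → ℝ}
    (hF : Integrable F γ) : ENNReal.ofReal (∫ x, F x ∂γ) ≤ ∫⁻ x, ENNReal.ofReal (F x) ∂γ := by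
  rw [integral_eq_lintegral_pos_part_sub_lintegral_neg_part hF]
  refine le_trans (ENNReal.ofReal_le_ofReal (sub_le_self _ ENNReal.toReal_nonneg)) ?_
  exact ENNReal.ofReal_toReal_le

lemma nn_eq {n : ℕ} (x y : Euc n) :
    ((‖x - y‖₊ : ℝ≥0∞)) ^ 2 = ENNReal.ofReal (∑ i, (x i - y i) ^ 2) := by
  have : ∑ i, (x i - y i) ^ 2 = ‖x - y‖ ^ 2 := by
    rw [EuclideanSpace.norm_sq_eq]
    simp
  rw [this, ENNReal.ofReal_pow (norm_nonneg _), ofReal_norm, enorm_eq_nnnorm]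

lemma W2_gaussDiag {n : ℕ} (m s t : Fin n → ℝ) (hs : ∀ i, 0 < s i) (ht : ∀ i, 0 < t i) :
    W2 (gaussDiag m s) (gaussDiag (fun _ => 0) t) ^ 2 = ∑ i, (m i ^ 2 + (s i - t i) ^ 2) := by
  have hnn : 0 ≤ ∑ i, (m i ^ 2 + (s i - t i) ^ 2) := Finset.sum_nonneg fun i _ => by positivity
  unfold W2
  rw [Real.sq_sqrt ENNReal.toReal_nonneg]
  suffices H : (⨅ γ ∈ {γ : Measure (Euc n × Euc n) | IsProbabilityMeasure γ ∧
      γ.map Prod.fst = gaussDiag m s ∧ γ.map Prod.snd = gaussDiag (fun _ => 0) t},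
      ∫⁻ p, (‖p.1 - p.2‖₊ : ℝ≥0∞) ^ 2 ∂γ) = ENNReal.ofReal (∑ i, (m i ^ 2 + (s i - t i) ^ 2)) by
    rw [H, ENNReal.toReal_ofReal hnn]
  apply le_antisymm
  · let T : (Fin n → ℝ) → Euc n × Euc n := fun z =>
      (WithLp.toLp 2 (fun i => m i + s i * z i), WithLp.toLp 2 (fun i => (fun _ => 0) i + t i * z i))
    have hT : Measurable T := (gaussDiag_meas m s).prodMk (gaussDiag_meas (fun _ => 0) t)
    have hp : IsProbabilityMeasure ((Measure.pi fun _ : Fin n => gaussianReal 0 1).map T) :=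
      Measure.isProbabilityMeasure_map hT.aemeasurable
    refine (iInf₂_le ((Measure.pi fun _ : Fin n => gaussianReal 0 1).map T)
      (show _ ∧ _ ∧ _ from ⟨hp, ?_, ?_⟩)).trans ?_
    · rw [Measure.map_map (by fun_prop) hT]; rfl
    · rw [Measure.map_map (by fun_prop) hT]; rfl
    · rw [lintegral_map (by fun_prop) hT]
      simp_rw [nn_eq]
      have key := quad_int_pi (fun i => m i ^ 2) (fun i => 2 * m i * (s i - t i))
        (fun i => (s i - t i) ^ 2)
      rw [← key.2, ofReal_integral_eq_lintegral_ofReal key.1]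
      · refine lintegral_mono fun z => ENNReal.ofReal_le_ofReal (le_of_eq ?_)
        refine Finset.sum_congr rfl fun i _ => ?_
        simp only [T]
        ring
      · refine Filter.Eventually.of_forall fun z => Finset.sum_nonneg fun i _ => ?_
        have : m i ^ 2 + 2 * m i * (s i - t i) * z i + (s i - t i) ^ 2 * z i ^ 2
          = (m i + (s i - t i) * z i) ^ 2 := by ring
        rw [this]; positivity
  · refine le_iInf₂ fun γ hγ => ?_
    obtain ⟨hγ0, h1, h2⟩ := hγ
    have k1 := quad_int_gd m s (fun i => m i ^ 2) (fun i => 2 * m i) (fun i => 1 - t i / s i)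
    have k2 := quad_int_gd (fun _ => 0) t (fun i => 0) (fun i => - 2 * m i) (fun i => 1 - s i / t i)
    rw [← h1, integrable_map_measure (by fun_prop) (by fun_prop),
      integral_map (by fun_prop) (by fun_prop)] at k1
    rw [← h2, integrable_map_measure (by fun_prop) (by fun_prop),
      integral_map (by fun_prop) (by fun_prop)] at k2
    have hI := integral_add k1.1 k2.1
    simp only [Function.comp_def] at hI
    rw [k1.2, k2.2, ← Finset.sum_add_distrib] at hI
    have hval : ∑ i, (m i ^ 2 + (s i - t i) ^ 2) = ∑ i, (m i ^ 2 + (1 - t i / s i) * s i ^ 2 +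
        (0 + (1 - s i / t i) * t i ^ 2)) := by
      refine Finset.sum_congr rfl fun i _ => ?_
      have := (hs i).ne'
      have := (ht i).ne'
      field_simp
      ring
    rw [hval, ← hI]
    refine (ofReal_integral_le (k1.1.add k2.1)).trans ?_
    simp_rw [nn_eq]
    refine lintegral_mono fun p => ENNReal.ofReal_le_ofReal ?_
    simp only [Function.comp_def, Pi.add_apply]
    rw [← Finset.sum_add_distrib]
    refine Finset.sum_le_sum fun i _ => ?_
    have h3 := hs i
    have h4 := ht i
    have : 0 ≤ (t i * (p.1 i - m i) - s i * p.2 i) ^ 2 / (s i * t i) := by positivity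
    have e : (t i * (p.1 i - m i) - s i * p.2 i) ^ 2 / (s i * t i) =
      t i / s i * (p.1 i - m i) ^ 2 + s i / t i * p.2 i ^ 2 - 2 * (p.1 i - m i) * p.2 i := by
      field_simp
      ring
    rw [e] at this
    nlinarith

lemma pi_gauss_density {n : ℕ} (v : Fin n → ℝ≥0) (hv : ∀ i, v i ≠ 0) :
    (Measure.pi fun i => gaussianReal 0 (v i)) =
      (volume : Measure (Fin n → ℝ)).withDensity
        (fun x => ENNReal.ofReal (∏ i, gaussianPDFReal 0 (v i) (x i))) := by
  refine Measure.pi_eq fun s hs => ?_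
  rw [withDensity_apply _ (MeasurableSet.univ_pi hs), ← lintegral_indicator (MeasurableSet.univ_pi hs)]
  have e : (Set.univ.pi s).indicator
      (fun x : Fin n → ℝ => ENNReal.ofReal (∏ i, gaussianPDFReal 0 (v i) (x i))) =
      fun x => ENNReal.ofReal (∏ i, (s i).indicator (gaussianPDFReal 0 (v i)) (x i)) := by
    ext x
    by_cases hx : x ∈ Set.univ.pi s
    · rw [Set.indicator_of_mem hx]
      congr 1
      refine Finset.prod_congr rfl fun i _ => ?_
      rw [Set.indicator_of_mem (hx i (Set.mem_univ i))]
    · rw [Set.indicator_of_notMem hx]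
      simp only [Set.mem_pi, Set.mem_univ, true_implies, not_forall] at hx
      obtain ⟨i, hi⟩ := hx
      rw [Finset.prod_eq_zero (Finset.mem_univ i) (Set.indicator_of_notMem hi _)]
      simp
  have hnn : ∀ i x, 0 ≤ (s i).indicator (gaussianPDFReal 0 (v i)) x := fun i x =>
    Set.indicator_nonneg (fun y _ => gaussianPDFReal_nonneg _ _ _) x
  have hint : ∀ i, Integrable ((s i).indicator (gaussianPDFReal 0 (v i))) := fun i =>
    (integrable_gaussianPDFReal 0 (v i)).indicator (hs i)
  rw [e, ← ofReal_integral_eq_lintegral_ofReal]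
  · rw [integral_fintype_prod_volume_eq_prod, ENNReal.ofReal_prod_of_nonneg]
    · refine Finset.prod_congr rfl fun i _ => ?_
      rw [integral_indicator (hs i), gaussianReal_apply_eq_integral _ (hv i)]
    · intro i _
      exact integral_nonneg (hnn i)
  · exact Integrable.fintype_prod_dep (μ := fun _ => volume) hint
  · exact Filter.Eventually.of_forall fun x => Finset.prod_nonneg fun i _ => hnn i _

lemma gaussDiag_density {n : ℕ} (a : Fin n → ℝ) (ha : ∀ i, 0 < a i) :
    ∃ C : ℝ≥0∞, gaussDiag (fun _ => 0) (fun i => (Real.sqrt (a i))⁻¹) =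
      C • (volume : Measure (Euc n)).withDensity
        (fun x => ENNReal.ofReal (Real.exp (-(∑ i, a i / 2 * x i ^ 2)))) := by
  let v : Fin n → ℝ≥0 := fun i => .mk ((Real.sqrt (a i))⁻¹ ^ 2) (sq_nonneg _)
  have hvv : ∀ i, (v i : ℝ) = (a i)⁻¹ := fun i => by
    change (Real.sqrt (a i))⁻¹ ^ 2 = _
    rw [inv_pow, Real.sq_sqrt (ha i).le]
  have hv : ∀ i, v i ≠ 0 := fun i h0 => by
    have := hvv i
    rw [h0] at this
    exact (inv_pos.2 (ha i)).ne this
  refine ⟨ENNReal.ofReal (∏ i, (Real.sqrt (2 * π * v i))⁻¹), ?_⟩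
  rw [gaussDiag_eq]
  change (Measure.pi fun i => gaussianReal 0 (v i)).map _ = _
  rw [pi_gauss_density v hv, ← withDensity_smul _ (by fun_prop)]
  have hmp := PiLp.volume_preserving_toLp (Fin n)
  ext s hs
  rw [Measure.map_apply hmp.measurable hs, withDensity_apply _ (hmp.measurable hs),
    withDensity_apply _ hs, ← hmp.setLIntegral_comp_preimage hs (by fun_prop)]
  refine lintegral_congr fun x => ?_
  simp only [Pi.smul_apply, smul_eq_mul]
  rw [← ENNReal.ofReal_mul (by positivity), ← Finset.sum_neg_distrib, Real.exp_sum,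
    ← Finset.prod_mul_distrib]
  congr 1
  refine Finset.prod_congr rfl fun i _ => ?_
  rw [gaussianPDFReal, hvv]
  congr 2
  have := (ha i).ne'
  field_simp
  simp

lemma gibbs_eq {d : ℕ} {m L : ℝ} (hm : 0 < m) (hL : 0 < L) {μ : Measure (Euc (2 * d))}
    (hμ : IsGibbs (fquad d m L) μ) :
    μ = gaussDiag (fun _ => 0)
      (fun i : Fin (2 * d) => (Real.sqrt (if (i : ℕ) < d then m else L))⁻¹) := by
  obtain ⟨hp, c, -, -, hc⟩ := hμ
  obtain ⟨C, hC⟩ := gaussDiag_density (fun i : Fin (2 * d) => if (i : ℕ) < d then m else L)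
    (fun i => by split_ifs <;> assumption)
  have h1 : μ Set.univ = 1 := measure_univ
  have h2 : gaussDiag (fun _ => 0)
      (fun i : Fin (2 * d) => (Real.sqrt (if (i : ℕ) < d then m else L))⁻¹) Set.univ = 1 :=
    measure_univ
  rw [hC] at h2 ⊢
  rw [hc] at h1 ⊢
  unfold fquad at h1 ⊢
  rw [Measure.smul_apply, smul_eq_mul] at h1 h2
  rw [ENNReal.eq_inv_of_mul_eq_one_left h1, ENNReal.eq_inv_of_mul_eq_one_left h2]

lemma gradient_fquad {d : ℕ} (m L : ℝ) (x : Euc (2 * d)) :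
    gradient (fquad d m L) x =
      WithLp.toLp 2 (fun i : Fin (2 * d) => (if (i : ℕ) < d then m else L) * x i) := by
  apply HasGradientAt.gradient
  rw [hasGradientAt_iff_hasFDerivAt]
  have hp : ∀ i : Fin (2 * d), HasFDerivAt (fun y : Euc (2 * d) => y i)
      (EuclideanSpace.proj i : Euc (2 * d) →L[ℝ] ℝ) x := fun i =>
    (EuclideanSpace.proj i : Euc (2 * d) →L[ℝ] ℝ).hasFDerivAt
  have := HasFDerivAt.fun_sum (u := Finset.univ) fun (i : Fin (2 * d)) _ =>
    ((hp i).pow 2).const_mul ((if (i : ℕ) < d then m else L) / 2)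
  refine this.congr_fderiv ?_
  ext v
  simp only [InnerProductSpace.toDual_apply_apply, PiLp.inner_apply]
  simp
  refine Finset.sum_congr rfl fun i _ => ?_
  split_ifs <;> ring

lemma gaussDiag_add {n : ℕ} {Ω : Type*} {mΩ : MeasurableSpace Ω} {P : Measure Ω}
    [IsProbabilityMeasure P] {X Y : Ω → Euc n} (hX : Measurable X) (hY : Measurable Y)
    (hXY : IndepFun X Y P) {m s m' s' S : Fin n → ℝ} (h1 : P.map X = gaussDiag m s)
    (h2 : P.map Y = gaussDiag m' s') (hS : ∀ i, S i ^ 2 = s i ^ 2 + s' i ^ 2) :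
    P.map (fun ω => X ω + Y ω) = gaussDiag (fun i => m i + m' i) S := by
  have : IsProbabilityMeasure (P.map (fun ω => X ω + Y ω)) :=
    Measure.isProbabilityMeasure_map (hX.add hY).aemeasurable
  apply Measure.ext_of_charFun
  rw [hXY.charFun_map_fun_add_eq_mul hX.aemeasurable hY.aemeasurable, h1, h2]
  ext t
  simp only [Pi.mul_apply, charFun_gaussDiag, ← Finset.prod_mul_distrib, ← Complex.exp_add]
  refine Finset.prod_congr rfl fun i _ => ?_
  have : (S i : ℂ) ^ 2 = s i ^ 2 + s' i ^ 2 := by exact_mod_cast hS i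
  rw [this]
  push_cast
  ring_nf

/-- variance of the iterate in a coordinate with curvature `a` -/
noncomputable def vk (a h : ℝ) (k : ℕ) : ℝ := 2 / (2 - a * h) * (1 - (1 - a * h) ^ (2 * k)) / a

lemma pow_lt_aux {a h : ℝ} (h1 : 0 < a * h) (h2 : a * h < 2) (k : ℕ) (hk : k ≠ 0) :
    (1 - a * h) ^ (2 * k) < 1 := by
  rw [pow_mul]
  exact pow_lt_one₀ (sq_nonneg _) (by nlinarith) hk

lemma vk_nonneg {a h : ℝ} (ha : 0 < a) (hh : 0 < h) (h2 : a * h < 2) (k : ℕ) : 0 ≤ vk a h k := by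
  have : (1 - a * h) ^ (2 * k) ≤ 1 := by
    rcases eq_or_ne k 0 with rfl | hk
    · simp
    · exact (pow_lt_aux (by positivity) h2 k hk).le
  unfold vk
  have h3 : 0 < 2 - a * h := by linarith
  have h4 : 0 ≤ 1 - (1 - a * h) ^ (2 * k) := by linarith
  positivity

lemma vk_pos {a h : ℝ} (ha : 0 < a) (hh : 0 < h) (h2 : a * h < 2) (k : ℕ) (hk : k ≠ 0) :
    0 < vk a h k := by
  have := (pow_lt_aux (by positivity) h2 k hk)
  unfold vk
  have h3 : 0 < 2 - a * h := by linarith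
  have h4 : 0 < 1 - (1 - a * h) ^ (2 * k) := by linarith
  positivity

lemma vk_succ {a h : ℝ} (ha : 0 < a) (h2 : a * h < 2) (k : ℕ) :
    vk a h (k + 1) = (1 - a * h) ^ 2 * vk a h k + 2 * h := by
  unfold vk
  have h3 : 2 - a * h ≠ 0 := by linarith
  have h4 := ha.ne'
  rw [mul_add 2 k 1, pow_add]
  field_simp
  ring

lemma law_iter {d : ℕ} {Ω : Type*} {mΩ : MeasurableSpace Ω} {P : Measure Ω}
    [IsProbabilityMeasure P]
    {m L : ℝ} (hm : 0 < m) (hL : 0 < L)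
    {h : ℝ} (hh0 : 0 < h) (hmh : m * h < 2) (hLh : L * h < 2)
    {ξ : ℕ → Ω → Euc (2 * d)} (hξmeas : ∀ k, Measurable (ξ k))
    (hξlaw : ∀ k, P.map (ξ k) = _root_.stdGaussian (2 * d))
    (hindep : iIndepFun ξ P)
    {Xb : ℕ → Ω → Euc (2 * d)} (hXb0 : Xb 0 = fun _ => WithLp.toLp 2 fun _ : Fin (2 * d) => (1 : ℝ))
    (hXb : ∀ k : ℕ, Xb (k + 1) = fun ω =>
      Xb k ω - h • gradient (fquad d m L) (Xb k ω) + Real.sqrt (2 * h) • ξ (k + 1) ω) (k : ℕ) :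
    (∃ g : ((i : Finset.range (k + 1)) → Euc (2 * d)) → Euc (2 * d), Measurable g ∧
      Xb k = fun ω => g (fun i => ξ i ω)) ∧
    P.map (Xb k) = gaussDiag (fun i => (1 - (if (i : ℕ) < d then m else L) * h) ^ k)
      (fun i => Real.sqrt (vk (if (i : ℕ) < d then m else L) h k)) := by
  set a : Fin (2 * d) → ℝ := fun i => if (i : ℕ) < d then m else L with ha
  have ha0 : ∀ i, 0 < a i := fun i => by simp only [ha]; split_ifs <;> assumption
  have ha2 : ∀ i, a i * h < 2 := fun i => by simp only [ha]; split_ifs <;> assumption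
  have hstep : ∀ k, Xb (k + 1) = fun ω =>
      (fun x : Euc (2 * d) => (WithLp.toLp 2 (fun i => 0 + (1 - a i * h) * x i) : Euc (2 * d)))
        (Xb k ω) + (fun x : Euc (2 * d) =>
          (WithLp.toLp 2 (fun i => 0 + Real.sqrt (2 * h) * x i) : Euc (2 * d))) (ξ (k + 1) ω) := by
    intro k
    rw [hXb k]
    funext ω
    rw [gradient_fquad]
    ext i
    simp [ha]
    split_ifs <;> ring
  induction k with
  | zero =>
    refine ⟨⟨fun _ => WithLp.toLp 2 fun _ => 1, by fun_prop, hXb0⟩, ?_⟩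
    rw [hXb0, gaussDiag]
    simp [vk]
  | succ k ih =>
    obtain ⟨⟨g, hg, hgX⟩, hlaw⟩ := ih
    have hXm : Measurable (Xb k) := by
      rw [hgX]
      exact hg.comp (measurable_pi_lambda _ fun i => hξmeas i)
    have hind : IndepFun (Xb k) (ξ (k + 1)) P := by
      have := hindep.indepFun_finset (Finset.range (k + 1)) {k + 1} (by simp) hξmeas
      have h2 := this.comp hg
        (measurable_pi_apply (⟨k + 1, by simp⟩ : ({k + 1} : Finset ℕ)))
      rw [hgX]
      exact h2
    have mA : Measurable (fun x : Euc (2 * d) =>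
      (WithLp.toLp 2 (fun i => 0 + (1 - a i * h) * x i) : Euc (2 * d))) := by fun_prop
    have mB : Measurable (fun x : Euc (2 * d) =>
      (WithLp.toLp 2 (fun i => 0 + Real.sqrt (2 * h) * x i) : Euc (2 * d))) := by fun_prop
    constructor
    · refine ⟨fun w =>
        (fun x : Euc (2 * d) => (WithLp.toLp 2 (fun i => 0 + (1 - a i * h) * x i) : Euc (2 * d)))
        (g (fun i => w ⟨i, Finset.mem_range.2 ((Finset.mem_range.1 i.2).trans (Nat.lt_succ_self _))⟩))
        + (fun x : Euc (2 * d) =>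
          (WithLp.toLp 2 (fun i => 0 + Real.sqrt (2 * h) * x i) : Euc (2 * d)))
          (w ⟨k + 1, Finset.mem_range.2 (Nat.lt_succ_self _)⟩), ?_, ?_⟩
      · refine (mA.comp (hg.comp ?_)).add (mB.comp (measurable_pi_apply _))
        exact measurable_pi_lambda _ fun i => measurable_pi_apply _
      · rw [hstep k, hgX]
    · rw [hstep k]
      have e1 : P.map (fun ω => (fun x : Euc (2 * d) =>
          (WithLp.toLp 2 (fun i => 0 + (1 - a i * h) * x i) : Euc (2 * d))) (Xb k ω)) =
          gaussDiag (fun i => 0 + (1 - a i * h) * (1 - a i * h) ^ k)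
            (fun i => (1 - a i * h) * Real.sqrt (vk (a i) h k)) := by
        rw [← gaussDiag_map _ _ (fun i => 1 - a i * h) (fun _ => 0), ← hlaw,
          Measure.map_map mA hXm]
        rfl
      have e2 : P.map (fun ω => (fun x : Euc (2 * d) =>
          (WithLp.toLp 2 (fun i => 0 + Real.sqrt (2 * h) * x i) : Euc (2 * d))) (ξ (k + 1) ω)) =
          gaussDiag (fun i => 0 + Real.sqrt (2 * h) * 0)
            (fun i => Real.sqrt (2 * h) * 1) := by
        rw [← gaussDiag_map _ _ (fun i => Real.sqrt (2 * h)) (fun _ => 0), ← stdG_eq,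
          ← hξlaw (k + 1), Measure.map_map mB (hξmeas _)]
        rfl
      refine (gaussDiag_add (mA.comp hXm) (mB.comp (hξmeas _)) (hind.comp mA mB) e1 e2
        (S := fun i => Real.sqrt (vk (a i) h (k + 1))) ?_).trans ?_
      rotate_left
      · congr 1
        funext i
        ring
      · intro i
        rw [Real.sq_sqrt (vk_nonneg (ha0 i) hh0 (ha2 i) _), mul_pow, mul_pow,
          Real.sq_sqrt (vk_nonneg (ha0 i) hh0 (ha2 i) _), Real.sq_sqrt (by positivity),
          vk_succ (ha0 i) (ha2 i)]
        ring

lemma sum_split (d : ℕ) (A B : ℝ) :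
    ∑ i : Fin (2 * d), (if (i : ℕ) < d then A else B) = d * A + d * B := by
  rw [Fin.sum_univ_eq_sum_range (fun i => if i < d then A else B) (2 * d), two_mul,
    Finset.sum_range_add]
  congr 1
  · rw [Finset.sum_congr rfl (g := fun _ => A) fun i hi => if_pos (Finset.mem_range.1 hi)]
    simp
  · simp

lemma term_eq {a h : ℝ} (ha : 0 < a) (h2 : a * h < 2) (k : ℕ) :
    ((1 - a * h) ^ k) ^ 2 + (Real.sqrt (vk a h k) - (Real.sqrt a)⁻¹) ^ 2 =
      (1 - a * h) ^ (2 * k) + 1 / a *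
        (Real.sqrt (2 / (2 - a * h)) * Real.sqrt (1 - (1 - a * h) ^ (2 * k)) - 1) ^ 2 := by
  have h3 : 0 ≤ 2 / (2 - a * h) := div_nonneg (by norm_num) (by linarith)
  have e : Real.sqrt (vk a h k) =
      Real.sqrt (2 / (2 - a * h)) * Real.sqrt (1 - (1 - a * h) ^ (2 * k)) * (Real.sqrt a)⁻¹ := by
    unfold vk
    rw [Real.sqrt_div' _ ha.le, Real.sqrt_mul h3, div_eq_mul_inv]
  have e2 : 1 / a = (Real.sqrt a)⁻¹ ^ 2 := by rw [inv_pow, Real.sq_sqrt ha.le, one_div]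
  rw [e, e2]
  ring

/-- **2-Wasserstein distance of the LMC iterates for a quadratic potential.**
For `f(x) = (m/2) Σ_{i<d} x_i² + (L/2) Σ_{d≤i<2d} x_i²` with `0 < m ≤ L`, the Gaussian target
`μ ∝ exp (-f)`, step size `0 < h < 2/L`, and initial point `x₀ = (1, …, 1)`, one has for all
`k ≥ 1` the exact formula for `W₂²(Law(x̄_k), μ)`. -/
theorem lmc_quadratic_w2_formula
    {d : ℕ} {Ω : Type*} {mΩ : MeasurableSpace Ω} {P : Measure Ω} [IsProbabilityMeasure P]
    {m L : ℝ} (hm : 0 < m) (hmL : m ≤ L)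
    {μ : Measure (Euc (2 * d))} (hμ : IsGibbs (fquad d m L) μ)
    {h : ℝ} (hh0 : 0 < h) (hh1 : h < 2 / L)
    {ξ : ℕ → Ω → Euc (2 * d)} (hξmeas : ∀ k, Measurable (ξ k))
    (hξlaw : ∀ k, P.map (ξ k) = stdGaussian (2 * d))
    (hindep : iIndepFun ξ P)
    {Xb : ℕ → Ω → Euc (2 * d)} (hXb0 : Xb 0 = fun _ => WithLp.toLp 2 fun _ : Fin (2 * d) => (1 : ℝ))
    (hXb : ∀ k : ℕ, Xb (k + 1) = fun ω =>
      Xb k ω - h • gradient (fquad d m L) (Xb k ω) + Real.sqrt (2 * h) • ξ (k + 1) ω)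
    (k : ℕ) (hk : 1 ≤ k) :
    (W2 (P.map (Xb k)) μ) ^ 2 =
      d * (1 - m * h) ^ (2 * k) +
        d / m * (Real.sqrt (2 / (2 - m * h)) * Real.sqrt (1 - (1 - m * h) ^ (2 * k)) - 1) ^ 2 +
      d * (1 - L * h) ^ (2 * k) +
        d / L * (Real.sqrt (2 / (2 - L * h)) * Real.sqrt (1 - (1 - L * h) ^ (2 * k)) - 1) ^ 2 := by
  have hL : 0 < L := lt_of_lt_of_le hm hmL
  have hLh : L * h < 2 := by rw [lt_div_iff₀ hL] at hh1; linarith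
  have hmh : m * h < 2 := lt_of_le_of_lt (mul_le_mul_of_nonneg_right hmL hh0.le) hLh
  rw [(law_iter hm hL hh0 hmh hLh hξmeas hξlaw hindep hXb0 hXb k).2, gibbs_eq hm hL hμ,
    W2_gaussDiag]
  · rw [Finset.sum_congr rfl (g := fun i : Fin (2 * d) => if (i : ℕ) < d then
      (1 - m * h) ^ (2 * k) + 1 / m *
        (Real.sqrt (2 / (2 - m * h)) * Real.sqrt (1 - (1 - m * h) ^ (2 * k)) - 1) ^ 2 else
      (1 - L * h) ^ (2 * k) + 1 / L *
        (Real.sqrt (2 / (2 - L * h)) * Real.sqrt (1 - (1 - L * h) ^ (2 * k)) - 1) ^ 2), sum_split]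
    · ring
    · intro i _
      split_ifs
      · exact term_eq hm hmh k
      · exact term_eq hL hLh k
  · intro i
    apply Real.sqrt_pos.2
    split_ifs
    · exact vk_pos hm hh0 hmh k (by omega)
    · exact vk_pos hL hh0 hLh k (by omega)
  · intro i
    apply inv_pos.2
    apply Real.sqrt_pos.2
    split_ifs <;> assumption

end
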